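/- Let m ≥ 2 and let w be a freely reduced word over A = {x_1, x_2, x_1^{-1}, x_2^{-1}} with 0 < p(w) < m and 0 < n(w) < m. Then there is a finite sequence of words w = w_0, w_1, ..., w_t, each obtained from the previous one by an unsigned length reducing τ-move (so in particular each w_i is freely reduced and represents the same element of DA(m) as w), such that w_t is a geodesic word. -/

import Mathlib

namespace ArtinRD

/-- The alternating product `xyxy...` with `m` factors, starting with `x`. -/
def altProd {G : Type*} [Monoid G] : ℕ → G → G → G
  | 0, _, _ => 1
  | n + 1, x, y => x * altProd n y x

/-- The Artin relators determined by a Coxeter-type matrix `M` (`⊤` meaning `∞`). -/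
def artinRels (n : ℕ) (M : Fin n → Fin n → ℕ∞) : Set (FreeGroup (Fin n)) :=
  {r | ∃ i j : Fin n, i ≠ j ∧ ∃ m : ℕ, M i j = (m : ℕ∞) ∧
    r = altProd m (FreeGroup.of i) (FreeGroup.of j) *
        (altProd m (FreeGroup.of j) (FreeGroup.of i))⁻¹}

/-- The Artin group associated to the matrix `M`. -/
abbrev ArtinGroup (n : ℕ) (M : Fin n → Fin n → ℕ∞) : Type := PresentedGroup (artinRels n M)

/-- The standard generator `x_i` of the Artin group. -/
def gen (n : ℕ) (M : Fin n → Fin n → ℕ∞) (i : Fin n) : ArtinGroup n M := PresentedGroup.of i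

/-- The set `A = {x_1^{±1}, ..., x_n^{±1}}` of standard letters. -/
def genSet (n : ℕ) (M : Fin n → Fin n → ℕ∞) : Set (ArtinGroup n M) :=
  {g | ∃ i : Fin n, g = gen n M i ∨ g = (gen n M i)⁻¹}

/-- Word length of `g` with respect to a set `S`: the least `N` such that `g` is a
product of `N` elements of `S`. -/
noncomputable def wordLength {G : Type*} [Group G] (S : Set G) (g : G) : ℕ :=
  sInf {N : ℕ | ∃ w : List G, (∀ a ∈ w, a ∈ S) ∧ w.length = N ∧ w.prod = g}

/-- The word length on an Artin group with respect to the standard letters. -/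
noncomputable def ℓA (n : ℕ) (M : Fin n → Fin n → ℕ∞) : ArtinGroup n M → ℕ :=
  wordLength (genSet n M)

/-- The Coxeter matrix of the dihedral Artin group `DA(m)`. -/
def DMat (m : ℕ) : Fin 2 → Fin 2 → ℕ∞ := fun i j => if i = j then 1 else (m : ℕ∞)

/-- The dihedral Artin group `DA(m)`. -/
abbrev DA (m : ℕ) : Type := ArtinGroup 2 (DMat m)

/-- A letter of `DA(m)`: a generator index with a sign (`true` = positive). -/
abbrev L2 := Fin 2 × Bool

/-- The inverse letter. -/
def linv (l : L2) : L2 := (l.1, !l.2)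

/-- The permutation `δ` of the letters induced by conjugation by `Δ`:
the identity if `m` is even, the swap of the two names if `m` is odd. -/
def dmap (m : ℕ) (l : L2) : L2 := if m % 2 = 0 then l else (l.1 + 1, l.2)

/-- The alternating word `ᵣ(a,b) = abab...` of length `r` starting with `a`. -/
def altL : ℕ → L2 → L2 → List L2
  | 0, _, _ => []
  | n + 1, a, b => a :: altL n b a

/-- The alternating word `(b,a)ᵣ = ...abab` of length `r` ending with `a`. -/
def altE (r : ℕ) (a b : L2) : List L2 := (altL r a b).reverse

/-- A word is freely reduced if no letter is followed by its inverse. -/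
def Reduced (w : List L2) : Prop := List.Chain' (fun p q => q ≠ linv p) w

/-- A positive alternating word: all letters positive, with alternating names. -/
def PosAlt (u : List L2) : Prop :=
  (∀ l ∈ u, l.2 = true) ∧ List.Chain' (fun p q => p.1 ≠ q.1) u

/-- A negative alternating word: all letters negative, with alternating names. -/
def NegAlt (u : List L2) : Prop :=
  (∀ l ∈ u, l.2 = false) ∧ List.Chain' (fun p q => p.1 ≠ q.1) u

/-- The group element of `DA(m)` corresponding to a letter. -/
def toGen2 (m : ℕ) (l : L2) : DA m :=
  if l.2 then gen 2 (DMat m) l.1 else (gen 2 (DMat m) l.1)⁻¹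

/-- The element of `DA(m)` represented by a word. -/
def wElt (m : ℕ) (w : List L2) : DA m := (w.map (toGen2 m)).prod

/-- A word is geodesic if its length equals the word length of the element
it represents. -/
def Geo (m : ℕ) (w : List L2) : Prop :=
  wordLength (genSet 2 (DMat m)) (wElt m w) = w.length

/-- An unsigned length-reducing `τ`-move: replacement of an over-critical subword
`ₚ(x,y) ξ (z⁻¹,t⁻¹)ₙ` by `ₘ₋ₚ(y⁻¹,x⁻¹) δ(ξ) (t,z)ₘ₋ₙ` (or the mirror form), where
`0 < p, n < m`, `p + n > m`, `{x,y} = {z,t} = {x₁,x₂}`, and the displayed alternating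
subwords are maximal alternating subwords of `w` of their signs. -/
def UMove (m : ℕ) (w w' : List L2) : Prop :=
  (∃ (α β ξ : List L2) (p nn : ℕ) (x y z t : L2),
    x.2 = true ∧ y.2 = true ∧ z.2 = true ∧ t.2 = true ∧
    x.1 ≠ y.1 ∧ z.1 ≠ t.1 ∧
    0 < p ∧ p < m ∧ 0 < nn ∧ nn < m ∧ m < p + nn ∧
    w = α ++ altL p x y ++ ξ ++ altE nn (linv t) (linv z) ++ β ∧
    w' = α ++ altL (m - p) (linv y) (linv x) ++ ξ.map (dmap m) ++ altE (m - nn) z t ++ β ∧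
    (∀ c, α.getLast? = some c → ¬(c.2 = true ∧ c.1 ≠ x.1)) ∧
    (∀ c d, (ξ ++ altE nn (linv t) (linv z) ++ β).head? = some c →
        (altL p x y).getLast? = some d → ¬(c.2 = true ∧ c.1 ≠ d.1)) ∧
    (∀ c d, (α ++ altL p x y ++ ξ).getLast? = some c →
        (altE nn (linv t) (linv z)).head? = some d → ¬(c.2 = false ∧ c.1 ≠ d.1)) ∧
    (∀ c, β.head? = some c → ¬(c.2 = false ∧ c.1 ≠ t.1)))
  ∨
  (∃ (α β ξ : List L2) (p nn : ℕ) (x y z t : L2),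
    x.2 = true ∧ y.2 = true ∧ z.2 = true ∧ t.2 = true ∧
    x.1 ≠ y.1 ∧ z.1 ≠ t.1 ∧
    0 < p ∧ p < m ∧ 0 < nn ∧ nn < m ∧ m < p + nn ∧
    w = α ++ altL nn (linv x) (linv y) ++ ξ ++ altE p t z ++ β ∧
    w' = α ++ altL (m - nn) y x ++ ξ.map (dmap m) ++ altE (m - p) (linv z) (linv t) ++ β ∧
    (∀ c, α.getLast? = some c → ¬(c.2 = false ∧ c.1 ≠ x.1)) ∧
    (∀ c d, (ξ ++ altE p t z ++ β).head? = some c →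
        (altL nn (linv x) (linv y)).getLast? = some d → ¬(c.2 = false ∧ c.1 ≠ d.1)) ∧
    (∀ c d, (α ++ altL nn (linv x) (linv y) ++ ξ).getLast? = some c →
        (altE p t z).head? = some d → ¬(c.2 = true ∧ c.1 ≠ d.1)) ∧
    (∀ c, β.head? = some c → ¬(c.2 = true ∧ c.1 ≠ t.1)))

/-!
An unsigned `τ`-move replaces two alternating runs of opposite signs, of lengths `p` and `n` with
`p + n > m`, by runs of lengths `m - p < n` and `m - n < p`. It therefore shortens the word and
creates no run longer than the longest run of the same sign. As long as `p(w) + n(w) > m`, the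
longest positive and the longest negative run of `w` admit such a move, so it remains to see that a
freely reduced word with `p(w) + n(w) ≤ m` is geodesic.

For this let `DA(m)` act by left multiplication on Garside normal forms `s₁ ⋯ sᵣ Δᵏ`, and fix a
threshold `0 < T < m` with `p(w) ≤ T ≤ m - n(w)`. A simple factor of length `ℓ` can be spelled
by `ℓ` positive letters, or as `Δ` and `m - ℓ` negative letters; with `Δ` costing `2T - m`, the sum
of the cheaper options over all factors is a potential that a single letter changes by at most `1`.
It grows by exactly `1` with each letter of `w`: the first factor records the current run, and a
positive run stays below the threshold while a negative one stays above it.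
-/

/-! ### Letters and alternating words -/

/-- The letter with the other name and the same sign. -/
def swapName (l : L2) : L2 := (l.1 + 1, l.2)

/-- The letter with the other name and the opposite sign: a `τ`-move turns an alternating run
starting with `l` into one starting with `swapInv l`. -/
def swapInv (l : L2) : L2 := (l.1 + 1, !l.2)

lemma swapName_involutive : Function.Involutive swapName := by
  unfold Function.Involutive; decide

lemma swapInv_involutive : Function.Involutive swapInv := by
  unfold Function.Involutive; decide

lemma swapInv_commute_swapName : Function.Commute swapInv swapName := fun _ ↦ rfl

lemma swapInv_eq_linv_swapName (l : L2) : swapInv l = linv (swapName l) := rfl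

lemma eq_swapName_of_ne {c d : L2} (hsign : c.2 = d.2) (hname : c.1 ≠ d.1) : d = swapName c := by
  revert c d; decide

lemma eq_add_one_of_ne {i j : Fin 2} (h : i ≠ j) : i = j + 1 := by
  revert i j; decide

lemma add_one_add_one (i : Fin 2) : i + 1 + 1 = i := by
  revert i; decide

lemma add_one_involutive : Function.Involutive (fun i : Fin 2 ↦ i + 1) := add_one_add_one

lemma iterate_swapName_snd (n : ℕ) (l : L2) : (swapName^[n] l).2 = l.2 := by
  induction n generalizing l with
  | zero => rfl
  | succ _ ih => exact ih (swapName l)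

lemma dmap_eq_iterate_swapName (m : ℕ) : dmap m = swapName^[m] := by
  funext l
  rcases m.even_or_odd with hm | hm
  · simp [dmap, Nat.even_iff.1 hm, swapName_involutive.iterate_even hm]
  · simp [dmap, Nat.odd_iff.1 hm, swapName_involutive.iterate_odd hm, swapName]

lemma dmap_involutive (m : ℕ) : Function.Involutive (dmap m) :=
  fun l ↦ by unfold dmap; split_ifs <;> simp [add_one_add_one]

lemma dmap_commute_swapName (m : ℕ) : Function.Commute (dmap m) swapName :=
  dmap_eq_iterate_swapName m ▸ Function.Commute.iterate_left (.refl swapName) m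

lemma dmap_linv (m : ℕ) (l : L2) : dmap m (linv l) = linv (dmap m l) := by
  unfold dmap; split_ifs <;> rfl

lemma dmap_snd (m : ℕ) (l : L2) : (dmap m l).2 = l.2 := by
  rw [dmap_eq_iterate_swapName, iterate_swapName_snd]

/-- The alternating word `ₙ(x, y)` in which `y` is the letter with the other name and the same
sign as `x`. -/
def alt (n : ℕ) (x : L2) : List L2 := altL n x (swapName x)

lemma alt_succ (n : ℕ) (x : L2) : alt (n + 1) x = x :: alt n (swapName x) := by
  rw [alt, alt, altL, swapName_involutive]

lemma alt_succ' (n : ℕ) (x : L2) : alt (n + 1) x = alt n x ++ [swapName^[n] x] := by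
  induction n generalizing x with
  | zero => rfl
  | succ n ih => rw [alt_succ, ih, alt_succ n x, Function.iterate_succ_apply, List.cons_append]

lemma length_alt (n : ℕ) (x : L2) : (alt n x).length = n := by
  induction n generalizing x with
  | zero => rfl
  | succ n ih => rw [alt_succ, List.length_cons, ih]

lemma alt_ne_nil {n : ℕ} (hn : 0 < n) {x : L2} : alt n x ≠ [] :=
  List.ne_nil_of_length_pos (by rwa [length_alt])

lemma sign_of_mem_alt {n : ℕ} {x l : L2} (hl : l ∈ alt n x) : l.2 = x.2 := by
  induction n generalizing x with
  | zero => cases hl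
  | succ n ih =>
    rw [alt_succ] at hl
    cases hl with
    | head => rfl
    | tail _ hl => exact ih (x := swapName x) hl

lemma isChain_alt (n : ℕ) (x : L2) : (alt n x).IsChain fun c d ↦ d = swapName c := by
  induction n generalizing x with
  | zero => exact .nil
  | succ n ih =>
    rw [alt_succ, List.isChain_cons]
    refine ⟨fun d hd ↦ ?_, ih _⟩
    cases n with
    | zero => cases hd
    | succ n => simpa [alt_succ] using hd.symm

lemma isChain_name_alt (n : ℕ) (x : L2) : (alt n x).IsChain fun c d ↦ c.1 ≠ d.1 :=
  (isChain_alt n x).imp fun c d hcd ↦ by simp [hcd, swapName]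

lemma posAlt_alt (n : ℕ) (i : Fin 2) : PosAlt (alt n (i, true)) :=
  ⟨fun _ ↦ sign_of_mem_alt, isChain_name_alt _ _⟩

lemma negAlt_alt (n : ℕ) (i : Fin 2) : NegAlt (alt n (i, false)) :=
  ⟨fun _ ↦ sign_of_mem_alt, isChain_name_alt _ _⟩

lemma map_alt {f : L2 → L2} (hf : Function.Commute f swapName) (n : ℕ) (x : L2) :
    (alt n x).map f = alt n (f x) := by
  induction n generalizing x with
  | zero => rfl
  | succ n ih => rw [alt_succ, alt_succ, List.map_cons, ih, hf x]

lemma reverse_alt (n : ℕ) (x : L2) : (alt n x).reverse = alt n (swapName^[n + 1] x) := by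
  induction n generalizing x with
  | zero => rfl
  | succ n ih =>
    have hcycle : swapName^[n] (swapName^[n + 1 + 1] x) = x := by
      rw [← Function.iterate_add_apply,
        swapName_involutive.iterate_even ⟨n + 1, by omega⟩, id]
    rw [alt_succ, List.reverse_cons, ih, alt_succ', hcycle, ← Function.iterate_succ_apply]

lemma altE_swapName (n : ℕ) (x : L2) : altE n x (swapName x) = alt n (swapName^[n + 1] x) :=
  reverse_alt n x

lemma head?_alt {n : ℕ} (hn : 0 < n) (x : L2) : (alt n x).head? = some x := by
  obtain ⟨k, rfl⟩ := Nat.exists_eq_succ_of_ne_zero hn.ne'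
  rfl

lemma getLast?_alt {n : ℕ} (hn : 0 < n) (x : L2) :
    (alt n x).getLast? = some (swapName^[n + 1] x) := by
  rw [← List.head?_reverse, reverse_alt, head?_alt hn]

/-- A `τ`-move changes the last letter of the first run by `swapInv` and `δ`. -/
lemma iterate_swapName_swapInv {m p : ℕ} (hp : p ≤ m) (x : L2) :
    swapName^[m - p + 1] (swapInv x) = dmap m (swapInv (swapName^[p + 1] x)) := by
  have hparity : m + (p + 1) = 2 * p + (m - p + 1) := by omega
  rw [dmap_eq_iterate_swapName, (swapInv_commute_swapName.iterate_right (p + 1)).eq,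
    ← Function.iterate_add_apply, hparity, Function.iterate_add_apply _ (2 * p),
    swapName_involutive.iterate_even (even_two_mul p), id]

/-! ### The Garside element -/

lemma wElt_cons (m : ℕ) (l : L2) (w : List L2) : wElt m (l :: w) = toGen2 m l * wElt m w :=
  List.prod_cons

lemma wElt_append (m : ℕ) (u v : List L2) : wElt m (u ++ v) = wElt m u * wElt m v := by
  simp [wElt]

lemma toGen2_linv (m : ℕ) (l : L2) : toGen2 m (linv l) = (toGen2 m l)⁻¹ := by
  rcases l with ⟨i, _ | _⟩ <;> simp [toGen2, linv]

lemma wElt_altL (m n : ℕ) (x y : L2) :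
    wElt m (altL n x y) = altProd n (toGen2 m x) (toGen2 m y) := by
  induction n generalizing x y with
  | zero => rfl
  | succ n ih => rw [altL, wElt_cons, ih, altProd]

lemma map_altProd {G H : Type*} [Monoid G] [Monoid H] (f : G →* H) (n : ℕ) (x y : G) :
    f (altProd n x y) = altProd n (f x) (f y) := by
  induction n generalizing x y with
  | zero => exact map_one f
  | succ n ih => rw [altProd, map_mul, ih, altProd]

lemma altProd_gen_comm (m : ℕ) {i j : Fin 2} (hij : i ≠ j) :
    altProd m (gen 2 (DMat m) i) (gen 2 (DMat m) j) =
      altProd m (gen 2 (DMat m) j) (gen 2 (DMat m) i) := by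
  have hrel : altProd m (FreeGroup.of i) (FreeGroup.of j) *
      (altProd m (FreeGroup.of j) (FreeGroup.of i))⁻¹ ∈ artinRels 2 (DMat m) :=
    ⟨i, j, hij, m, by simp [DMat, hij], rfl⟩
  have hone := PresentedGroup.one_of_mem hrel
  rw [map_mul, map_inv, map_altProd, map_altProd] at hone
  exact mul_inv_eq_one.1 hone

/-- The Garside element `Δ = ₘ(x₁, x₂)` of `DA(m)`. -/
def garside (m : ℕ) : DA m := wElt m (alt m (0, true))

lemma wElt_alt_self (m : ℕ) {x : L2} (hx : x.2 = true) : wElt m (alt m x) = garside m := by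
  obtain ⟨i, s⟩ := x
  obtain rfl : s = true := hx
  fin_cases i
  · rfl
  · rw [garside, alt, alt, wElt_altL, wElt_altL]
    exact altProd_gen_comm m (by decide : (1 : Fin 2) ≠ 0)

lemma toGen2_mul_garside (m : ℕ) (l : L2) :
    toGen2 m l * garside m = garside m * toGen2 m (dmap m l) := by
  have hpos : ∀ l : L2, l.2 = true →
      toGen2 m l * garside m = garside m * toGen2 m (dmap m l) := by
    intro l hl
    -- Both sides spell the alternating word of length `m + 1` starting with `l`.
    have hspell := congrArg (wElt m) ((alt_succ m l).symm.trans (alt_succ' m l))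
    rw [wElt_cons, wElt_append, wElt_alt_self m (x := swapName l) hl, wElt_alt_self m hl,
      ← dmap_eq_iterate_swapName] at hspell
    simpa [wElt] using hspell
  cases hl : l.2 with
  | true => exact hpos l hl
  | false =>
    have hinv := hpos (linv l) (by simp [linv, hl])
    rw [dmap_linv, toGen2_linv, toGen2_linv, inv_mul_eq_iff_eq_mul, ← mul_assoc,
      eq_mul_inv_iff_mul_eq] at hinv
    exact hinv.symm

lemma wElt_mul_garside (m : ℕ) (w : List L2) :
    wElt m w * garside m = garside m * wElt m (w.map (dmap m)) := by
  induction w with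
  | nil => simp [wElt]
  | cons l w ih =>
    rw [List.map_cons, wElt_cons, wElt_cons, mul_assoc, ih, ← mul_assoc, toGen2_mul_garside,
      mul_assoc]

lemma wElt_map_dmap_mul_garside (m : ℕ) (w : List L2) :
    wElt m (w.map (dmap m)) * garside m = garside m * wElt m w := by
  rw [wElt_mul_garside, List.map_map, (dmap_involutive m).comp_self, List.map_id]

lemma wElt_alt_eq_mul_garside {m p q : ℕ} (hpq : p + q = m) {x : L2} (hx : x.2 = true) :
    wElt m (alt p x) = wElt m (alt q (swapInv x)) * garside m := by
  induction q generalizing p x with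
  | zero =>
    obtain rfl : p = m := hpq
    rw [wElt_alt_self _ hx]
    exact (one_mul _).symm
  | succ q ih =>
    have hlonger := ih (p := p + 1) (x := swapName x) (by omega) hx
    rw [alt_succ, swapName_involutive, wElt_cons] at hlonger
    rw [alt_succ, wElt_cons, swapInv_eq_linv_swapName, toGen2_linv, mul_assoc,
      eq_inv_mul_iff_mul_eq]
    exact hlonger

/-! ### Runs in words -/

/-- Neither free cancellation nor an alternating run can involve both letters of `c d`. -/
def Breaks (c d : L2) : Prop := d ≠ linv c ∧ d ≠ swapName c

/-- No free cancellation and no alternating run crosses the junction of `A ++ B`. -/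
def Separated (A B : List L2) : Prop := ∀ c ∈ A.getLast?, ∀ d ∈ B.head?, Breaks c d

lemma Breaks.symm {c d : L2} (h : Breaks c d) : Breaks d c := by
  revert h; unfold Breaks; revert c d; decide

lemma breaks_swapInv_left {c d : L2} : Breaks (swapInv c) d ↔ Breaks c d := by
  unfold Breaks; revert c d; decide

lemma breaks_swapInv_right {c d : L2} : Breaks c (swapInv d) ↔ Breaks c d := by
  unfold Breaks; revert c d; decide

lemma breaks_dmap (m : ℕ) {c d : L2} : Breaks (dmap m c) (dmap m d) ↔ Breaks c d := by
  unfold Breaks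
  rw [← dmap_linv, ← (dmap_commute_swapName m).eq, (dmap_involutive m).injective.ne_iff,
    (dmap_involutive m).injective.ne_iff]

namespace Separated

variable {A B C : List L2} {m n k : ℕ} {x : L2}

lemma map_dmap (h : Separated A B) (m : ℕ) :
    Separated (A.map (dmap m)) (B.map (dmap m)) := by
  intro c' hc' d' hd'
  rw [List.getLast?_map] at hc'
  rw [List.head?_map] at hd'
  obtain ⟨c, hc, rfl⟩ := Option.mem_map.1 hc'
  obtain ⟨d, hd, rfl⟩ := Option.mem_map.1 hd'
  exact (breaks_dmap m).2 (h c hc d hd)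

lemma append_left_iff (hB : B ≠ []) : Separated (A ++ B) C ↔ Separated B C := by
  rw [Separated, List.getLast?_append_of_ne_nil A hB, Separated]

lemma append_right_iff (hB : B ≠ []) : Separated A (B ++ C) ↔ Separated A B := by
  rw [Separated, List.head?_append_of_ne_nil B hB, Separated]

lemma alt_right_iff (hn : 0 < n) : Separated A (alt n x) ↔ ∀ c ∈ A.getLast?, Breaks c x := by
  simp [Separated, head?_alt hn]

lemma alt_left_iff (hn : 0 < n) :
    Separated (alt n x) B ↔ ∀ d ∈ B.head?, Breaks (swapName^[n + 1] x) d := by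
  simp [Separated, getLast?_alt hn]

lemma alt_swapInv_right_iff (hn : 0 < n) (hk : 0 < k) :
    Separated A (alt k (swapInv x)) ↔ Separated A (alt n x) := by
  simp only [alt_right_iff hn, alt_right_iff hk, breaks_swapInv_right]

lemma alt_swapInv_left_iff (hn : 0 < n) (hnm : n < m) :
    Separated (alt (m - n) (swapInv x)) (B.map (dmap m)) ↔ Separated (alt n x) B := by
  rw [alt_left_iff hn, alt_left_iff (Nat.sub_pos_of_lt hnm), iterate_swapName_swapInv hnm.le]
  simp only [List.head?_map, Option.mem_map, forall_exists_index, and_imp,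
    forall_apply_eq_imp_iff₂, breaks_dmap, breaks_swapInv_left]

lemma not_alternate_alt_right (h : Separated A (alt n x)) (c d : L2) (hc : A.getLast? = some c)
    (hd : (alt n x).head? = some d) : ¬(c.2 = x.2 ∧ c.1 ≠ d.1) := fun ⟨hsign, hname⟩ ↦
  (h c hc d hd).2 (eq_swapName_of_ne
    (hsign.trans (sign_of_mem_alt (List.mem_of_head? hd)).symm) hname)

lemma not_alternate_alt_left (h : Separated (alt n x) B) (c d : L2) (hc : B.head? = some c)
    (hd : (alt n x).getLast? = some d) : ¬(c.2 = x.2 ∧ c.1 ≠ d.1) := fun ⟨hsign, hname⟩ ↦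
  (h d hd c hc).symm.2 (eq_swapName_of_ne
    (hsign.trans (sign_of_mem_alt (List.mem_of_getLast? hd)).symm) hname)

end Separated

lemma alt_infix_append {A B : List L2} {k : ℕ} {x : L2} (hsep : Separated A B)
    (h : alt k x <:+: A ++ B) : alt k x <:+: A ∨ alt k x <:+: B := by
  rcases List.infix_append_iff.1 h with hA | hB | ⟨u, v, huv, hu, hv⟩
  · exact .inl hA
  · exact .inr hB
  rcases u.eq_nil_or_concat with rfl | ⟨u, c, rfl⟩
  · exact .inr (huv ▸ hv.isInfix)
  rcases v with _ | ⟨d, v⟩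
  · exact .inl (by simpa [huv] using hu.isInfix)
  have hswap : d = swapName c := by
    have hchain := huv ▸ isChain_alt k x
    exact (List.isChain_append.1 hchain).2.2 c (by simp) d (by simp)
  obtain ⟨A, rfl⟩ := hu
  obtain ⟨B, rfl⟩ := hv
  exact absurd hswap (hsep c (by simp) d (by simp)).2

/-- `w` is freely reduced and its alternating runs have length at most `b true` if positive and at
most `b false` if negative. -/
structure RunBounded (b : Bool → ℕ) (w : List L2) : Prop where
  reduced : Reduced w
  le_of_infix : ∀ ⦃k x⦄, alt k x <:+: w → k ≤ b x.2

namespace RunBounded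

variable {b : Bool → ℕ} {A B : List L2}

lemma of_infix (hB : RunBounded b B) (h : A <:+: B) : RunBounded b A :=
  ⟨hB.reduced.infix h, fun _ _ hk ↦ hB.le_of_infix (hk.trans h)⟩

lemma append (hA : RunBounded b A) (hB : RunBounded b B) (hsep : Separated A B) :
    RunBounded b (A ++ B) where
  reduced := List.isChain_append.2 ⟨hA.reduced, hB.reduced, fun c hc d hd ↦ (hsep c hc d hd).1⟩
  le_of_infix _ _ hk := (alt_infix_append hsep hk).elim (hA.le_of_infix ·) (hB.le_of_infix ·)

lemma map_dmap (hA : RunBounded b A) (m : ℕ) : RunBounded b (A.map (dmap m)) where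
  reduced := by
    refine List.isChain_map_of_isChain _ (fun c d hcd ↦ ?_) hA.reduced
    rwa [← dmap_linv, (dmap_involutive m).injective.ne_iff]
  le_of_infix k x hk := by
    have hback := hk.map (dmap m)
    rw [List.map_map, (dmap_involutive m).comp_self, List.map_id,
      map_alt (dmap_commute_swapName m)] at hback
    simpa [dmap_snd] using hA.le_of_infix hback

lemma separated_alt_right {n : ℕ} {x : L2} (h : RunBounded b (A ++ alt n x))
    (hn : b x.2 ≤ n) : Separated A (alt n x) := by
  intro c hc d hd
  refine ⟨(List.isChain_append.1 h.reduced).2.2 c hc d hd, ?_⟩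
  rintro rfl
  obtain ⟨A, rfl⟩ := List.getLast?_eq_some_iff.1 hc
  cases n with
  | zero => cases hd
  | succ n =>
    obtain rfl : x = swapName c := by simpa [alt_succ] using hd
    have hlonger : alt (n + 1 + 1) c <:+: A ++ [c] ++ alt (n + 1) (swapName c) :=
      ⟨A, [], by simp [alt_succ _ c]⟩
    exact absurd ((h.le_of_infix hlonger).trans hn) (by omega)

lemma separated_alt_left {n : ℕ} {x : L2} (h : RunBounded b (alt n x ++ B))
    (hn : b x.2 ≤ n) : Separated (alt n x) B := by
  intro c hc d hd
  refine ⟨(List.isChain_append.1 h.reduced).2.2 c hc d hd, ?_⟩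
  rintro rfl
  obtain ⟨B, rfl⟩ := List.head?_eq_some_iff.1 hd
  cases n with
  | zero => cases hc
  | succ n =>
    obtain rfl : swapName^[n] x = c := by simpa [alt_succ'] using hc
    rw [← Function.iterate_succ_apply' swapName n x] at h
    have hlonger : alt (n + 1 + 1) x <:+:
        alt (n + 1) x ++ swapName^[n + 1] x :: B :=
      ⟨[], B, by simp [alt_succ' (n + 1) x]⟩
    exact absurd ((h.le_of_infix hlonger).trans hn) (by omega)

end RunBounded

lemma runBounded_alt {b : Bool → ℕ} {n : ℕ} {x : L2} (hn : n ≤ b x.2) : RunBounded b (alt n x) where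
  reduced := (isChain_alt n x).imp fun c d hcd ↦ by
    subst hcd; revert c; decide
  le_of_infix k y hk := by
    rcases k.eq_zero_or_pos with rfl | hpos
    · exact Nat.zero_le _
    have hy : y ∈ alt n x :=
      hk.subset (List.mem_of_mem_head? (head?_alt hpos y))
    have hlen := hk.length_le
    rw [length_alt, length_alt] at hlen
    exact sign_of_mem_alt hy ▸ hlen.trans hn

/-- The length of a longest alternating run of sign `s` in `w`, without the cap `m` of the
functions `p` (for `s = true`) and `n` (for `s = false`). -/
noncomputable def maxRun (s : Bool) (w : List L2) : ℕ :=
  sSup {k | ∃ i : Fin 2, alt k (i, s) <:+: w}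

lemma bddAbove_run (s : Bool) (w : List L2) :
    BddAbove {k | ∃ i : Fin 2, alt k (i, s) <:+: w} := by
  refine ⟨w.length, ?_⟩
  rintro k ⟨i, hk⟩
  exact length_alt k (i, s) ▸ hk.length_le

lemma exists_alt_maxRun_infix (s : Bool) (w : List L2) :
    ∃ i : Fin 2, alt (maxRun s w) (i, s) <:+: w :=
  Nat.sSup_mem (s := {k | ∃ i : Fin 2, alt k (i, s) <:+: w})
    ⟨0, 0, List.nil_infix⟩ (bddAbove_run s w)

lemma runBounded_maxRun {w : List L2} (hw : Reduced w) : RunBounded (maxRun · w) w :=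
  ⟨hw, fun _ x hk ↦ le_csSup (bddAbove_run x.2 w) ⟨x.1, hk⟩⟩

lemma RunBounded.maxRun_le {b : Bool → ℕ} {w : List L2} (hw : RunBounded b w) (s : Bool) :
    maxRun s w ≤ b s := by
  obtain ⟨i, hi⟩ := exists_alt_maxRun_infix s w
  exact hw.le_of_infix hi

/-! ### The action on Garside normal forms -/

/-- Garside normal forms in `DA(n + 2)`. The pair `(k, some (e, j₁, [j₂, …, jᵣ]))` stands for
`s₁ ⋯ sᵣ Δᵏ`, where `sᵢ` is a positive alternating word of length `jᵢ + 1 ≤ n + 1`, the first letter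
of `s₁` has name `e`, and the first letter of each later factor is the last letter of the factor
before it; `(k, none)` stands for `Δᵏ`. -/
abbrev NormalForm (n : ℕ) : Type := ℤ × Option (Fin 2 × Fin (n + 1) × List (Fin (n + 1)))

namespace NormalForm

variable {n : ℕ}

/-- The normal form with exponent `k`, first letter `e` and factors `js`; `e` is ignored when there
are no factors. -/
def ofFactors (k : ℤ) (e : Fin 2) : List (Fin (n + 1)) → NormalForm n
  | [] => (k, none)
  | j :: js => (k, some (e, j, js))

/-- Left multiplication by the generator `xᵢ`. -/
def mulGen (i : Fin 2) : NormalForm n → NormalForm n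
  | (k, none) => ofFactors k i [0]
  | (k, some (e, j, js)) =>
    if e = i then ofFactors k i (0 :: j :: js)
    -- A completed factor `Δ` moves to the right, changing the first letter of `js` by `δ` into `e`.
    else j.lastCases (ofFactors (k + 1) e js) fun j ↦ ofFactors k i (j.succ :: js)

/-- Left multiplication by the inverse of the generator `xᵢ`. -/
def divGen (i : Fin 2) : NormalForm n → NormalForm n
  | (k, none) => ofFactors (k - 1) (i + 1) [Fin.last n]
  | (k, some (e, j, js)) =>
    if e = i then j.cases (ofFactors k i js) fun j ↦ ofFactors k (i + 1) (j.castSucc :: js)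
    else ofFactors (k - 1) e (Fin.last n :: j :: js)

lemma mulGen_ofFactors_self (i : Fin 2) (k : ℤ) (js : List (Fin (n + 1))) :
    mulGen i (ofFactors k i js) = ofFactors k i (0 :: js) := by
  cases js <;> simp [mulGen, ofFactors]

lemma mulGen_ofFactors_last (e : Fin 2) (k : ℤ) (js : List (Fin (n + 1))) :
    mulGen (e + 1) (ofFactors k e (Fin.last n :: js)) = ofFactors (k + 1) e js := by
  simp [mulGen, ofFactors]

lemma mulGen_ofFactors_castSucc (e : Fin 2) (k : ℤ) (j : Fin n) (js : List (Fin (n + 1))) :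
    mulGen (e + 1) (ofFactors k e (j.castSucc :: js)) = ofFactors k (e + 1) (j.succ :: js) := by
  simp [mulGen, ofFactors]

lemma divGen_ofFactors_add_one (e : Fin 2) (k : ℤ) (js : List (Fin (n + 1))) :
    divGen (e + 1) (ofFactors k e js) = ofFactors (k - 1) e (Fin.last n :: js) := by
  cases js <;> simp [divGen, ofFactors, add_one_add_one]

lemma divGen_ofFactors_zero (i : Fin 2) (k : ℤ) (js : List (Fin (n + 1))) :
    divGen i (ofFactors k i (0 :: js)) = ofFactors k i js := by
  simp [divGen, ofFactors]

lemma divGen_ofFactors_succ (e : Fin 2) (k : ℤ) (j : Fin n) (js : List (Fin (n + 1))) :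
    divGen (e + 1) (ofFactors k (e + 1) (j.succ :: js)) = ofFactors k e (j.castSucc :: js) := by
  simp [divGen, ofFactors, add_one_add_one]

lemma exists_eq_ofFactors (i : Fin 2) (s : NormalForm n) :
    (∃ k js, s = ofFactors k i js) ∨
      ∃ e, i = e + 1 ∧ ∃ k j js, s = ofFactors k e (j :: js) := by
  obtain ⟨k, _ | ⟨e, j, js⟩⟩ := s
  · exact .inl ⟨k, [], rfl⟩
  · by_cases hi : i = e
    · subst hi
      exact .inl ⟨k, j :: js, rfl⟩
    · exact .inr ⟨e, eq_add_one_of_ne hi, k, j, js, rfl⟩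

lemma divGen_mulGen (i : Fin 2) (s : NormalForm n) : divGen i (mulGen i s) = s := by
  rcases exists_eq_ofFactors i s with ⟨k, js, rfl⟩ | ⟨e, rfl, k, j, js, rfl⟩
  · rw [mulGen_ofFactors_self, divGen_ofFactors_zero]
  · cases j using Fin.lastCases with
    | last => rw [mulGen_ofFactors_last, divGen_ofFactors_add_one, add_sub_cancel_right]
    | cast j => rw [mulGen_ofFactors_castSucc, divGen_ofFactors_succ]

lemma mulGen_divGen (i : Fin 2) (s : NormalForm n) : mulGen i (divGen i s) = s := by
  obtain ⟨e, rfl⟩ : ∃ e, i = e + 1 := ⟨i + 1, (add_one_add_one i).symm⟩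
  rcases exists_eq_ofFactors e s with ⟨k, js, rfl⟩ | ⟨e, rfl, k, j, js, rfl⟩
  · rw [divGen_ofFactors_add_one, mulGen_ofFactors_last, sub_add_cancel]
  · cases j using Fin.cases with
    | zero => rw [add_one_add_one, divGen_ofFactors_zero, mulGen_ofFactors_self]
    | succ j =>
      obtain ⟨e, rfl⟩ : ∃ e', e = e' + 1 := ⟨e + 1, (add_one_add_one e).symm⟩
      rw [add_one_add_one, divGen_ofFactors_succ, mulGen_ofFactors_castSucc]

/-- Left multiplication by `xᵢ` as a permutation of the normal forms. -/
def genPerm (n : ℕ) (i : Fin 2) : Equiv.Perm (NormalForm n) where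
  toFun := mulGen i
  invFun := divGen i
  left_inv := divGen_mulGen i
  right_inv := mulGen_divGen i

/-- Left multiplication by the positive alternating word of length `r` whose last letter has
name `i`: this letter acts first. -/
def mulAlt : ℕ → Fin 2 → NormalForm n → NormalForm n
  | 0, _, s => s
  | r + 1, i, s => mulAlt r (i + 1) (mulGen i s)

lemma mulAlt_succ (r : ℕ) (i : Fin 2) (s : NormalForm n) :
    mulAlt (r + 1) i s = mulGen ((· + 1)^[r] i) (mulAlt r i s) := by
  induction r generalizing i s with
  | zero => rfl
  | succ r ih => rw [mulAlt, ih]; rfl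

lemma mulAlt_add (a b : ℕ) (i : Fin 2) (s : NormalForm n) :
    mulAlt (a + b) i s = mulAlt b ((· + 1)^[a] i) (mulAlt a i s) := by
  induction b with
  | zero => rfl
  | succ b ih =>
    rw [← add_assoc, mulAlt_succ, ih, mulAlt_succ, ← Function.iterate_add_apply, add_comm b a]

lemma altProd_genPerm_apply (r : ℕ) (i : Fin 2) (s : NormalForm n) :
    altProd r (genPerm n i) (genPerm n (i + 1)) s = mulAlt r ((· + 1)^[r + 1] i) s := by
  induction r generalizing i with
  | zero => rfl
  | succ r ih =>
    have hfirst : (· + 1)^[r] ((· + 1)^[r + 1 + 1] i) = i := by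
      rw [← Function.iterate_add_apply, add_one_involutive.iterate_even ⟨r + 1, by omega⟩, id]
    have htail := ih (i + 1)
    rw [add_one_add_one] at htail
    rw [altProd, Equiv.Perm.mul_apply, htail, mulAlt_succ, hfirst]
    rfl

lemma mulAlt_grow (r : ℕ) (e : Fin 2) (k : ℤ) (j : ℕ) (hj : j + r < n + 1)
    (js : List (Fin (n + 1))) :
    mulAlt r (e + 1) (ofFactors k e (⟨j, by omega⟩ :: js)) =
      ofFactors k ((· + 1)^[r] e) (⟨j + r, hj⟩ :: js) := by
  induction r generalizing e j with
  | zero => rfl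
  | succ r ih =>
    have hgrow := ih (e + 1) (j + 1) (by omega)
    simp only [add_right_comm j 1 r] at hgrow
    exact (congrArg (mulAlt r (e + 1 + 1))
      (mulGen_ofFactors_castSucc e k ⟨j, by omega⟩ js)).trans hgrow

lemma mulAlt_push (r : ℕ) (hr : r < n + 1) (e : Fin 2) (k : ℤ) (js : List (Fin (n + 1))) :
    mulAlt (r + 1) e (ofFactors k e js) = ofFactors k ((· + 1)^[r] e) (⟨r, hr⟩ :: js) := by
  rw [mulAlt, mulGen_ofFactors_self]
  simpa using mulAlt_grow r e k 0 (by omega) js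

lemma mulAlt_complete (j : ℕ) (hj : j < n + 1) (e : Fin 2) (k : ℤ) (js : List (Fin (n + 1))) :
    mulAlt (n - j + 1) (e + 1) (ofFactors k e (⟨j, hj⟩ :: js)) =
      ofFactors (k + 1) ((· + 1)^[n - j] e) js := by
  have hlast : (⟨j + (n - j), by omega⟩ : Fin (n + 1)) = Fin.last n := Fin.ext (by simp; omega)
  rw [mulAlt_succ, mulAlt_grow (n - j) e k j (by omega), hlast, ← Function.iterate_succ_apply,
    Function.iterate_succ_apply', mulGen_ofFactors_last]

/-- The right-hand side does not depend on `i`: both spellings of `Δ` act in the same way, which is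
the defining relation of `DA(n + 2)`. -/
lemma mulAlt_garside (i e : Fin 2) (k : ℤ) (js : List (Fin (n + 1))) :
    mulAlt (n + 2) i (ofFactors k e js) = ofFactors (k + 1) ((· + 1)^[n] e) js := by
  have hself : ∀ e, mulAlt (n + 2) e (ofFactors k e js) = ofFactors (k + 1) ((· + 1)^[n] e) js := by
    intro e
    rw [mulAlt_succ, mulAlt_push n n.lt_succ_self, Function.iterate_succ_apply' _ n]
    exact mulGen_ofFactors_last _ k js
  by_cases hi : i = e
  · rw [hi, hself]
  obtain rfl := eq_add_one_of_ne hi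
  rcases js with _ | ⟨⟨j, hj⟩, js⟩
  · exact hself (e + 1)
  · have hsplit : n + 2 = (n - j + 1) + (j + 1) := by omega
    have hsum : j + (n - j) = n := by omega
    have hnext : (· + 1)^[n - j + 1] (e + 1) = (· + 1)^[n - j] e := by
      rw [Function.iterate_succ_apply, add_one_add_one]
    rw [hsplit, mulAlt_add, mulAlt_complete, hnext, mulAlt_push j hj,
      ← Function.iterate_add_apply, hsum]

lemma altProd_genPerm_comm {i j : Fin 2} (hij : i ≠ j) :
    altProd (n + 2) (genPerm n i) (genPerm n j) = altProd (n + 2) (genPerm n j) (genPerm n i) := by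
  obtain rfl := eq_add_one_of_ne hij.symm
  ext1 s
  have hswap := altProd_genPerm_apply (n + 2) (i + 1) s
  rw [add_one_add_one] at hswap
  obtain ⟨k, e, js, rfl⟩ : ∃ k e js, s = ofFactors k e js := by
    rcases exists_eq_ofFactors 0 s with ⟨k, js, hs⟩ | ⟨e, -, k, j, js, hs⟩ <;> exact ⟨_, _, _, hs⟩
  rw [hswap, altProd_genPerm_apply, mulAlt_garside, mulAlt_garside]

/-- The action of `DA(n + 2)` on its Garside normal forms by left multiplication. -/
def action (n : ℕ) : DA (n + 2) →* Equiv.Perm (NormalForm n) :=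
  PresentedGroup.toGroup (f := genPerm n) (by
    rintro r ⟨i, j, hij, m, hm, rfl⟩
    obtain rfl : n + 2 = m := by exact_mod_cast (if_neg hij).symm.trans hm
    rw [map_mul, map_inv, map_altProd, map_altProd, FreeGroup.lift_apply_of,
      FreeGroup.lift_apply_of, altProd_genPerm_comm hij, mul_inv_cancel])

lemma action_gen (i : Fin 2) : action n (gen 2 (DMat (n + 2)) i) = genPerm n i :=
  PresentedGroup.toGroup.of _

lemma action_toGen2_pos (i : Fin 2) (s : NormalForm n) :
    action n (toGen2 (n + 2) (i, true)) s = mulGen i s := by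
  rw [toGen2, if_pos rfl, action_gen]; rfl

lemma action_toGen2_neg (i : Fin 2) (s : NormalForm n) :
    action n (toGen2 (n + 2) (i, false)) s = divGen i s := by
  rw [toGen2, if_neg Bool.false_ne_true, map_inv, action_gen]; rfl

end NormalForm

/-! ### The potential -/

namespace NormalForm

variable {n : ℕ} {T : ℤ}

/-- The contribution of a factor of length `j + 1` to the potential with threshold `T`. As `Δᵏ` is
given the potential `(2T - (n + 2)) k`, the second entry is the cost of spelling the factor as a
negative alternating word of length `n + 1 - j` followed by `Δ`. -/
def factorWeight (T : ℤ) (j : Fin (n + 1)) : ℤ := min (j + 1) (2 * T - (j + 1))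

/-- The potential of a normal form with threshold `T`, a lower bound for the length of the words
representing it. -/
def potential (T : ℤ) : NormalForm n → ℤ
  | (k, none) => (2 * T - (n + 2)) * k
  | (k, some (_, j, js)) => (2 * T - (n + 2)) * k + ((j :: js).map (factorWeight T)).sum

lemma potential_ofFactors (k : ℤ) (e : Fin 2) (js : List (Fin (n + 1))) :
    potential T (ofFactors k e js) = (2 * T - (n + 2)) * k + (js.map (factorWeight T)).sum := by
  cases js <;> simp [potential, ofFactors]

lemma potential_mulGen_mem_Icc (hT : 0 < T) (hTn : T < n + 2) (i : Fin 2) (s : NormalForm n) :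
    potential T (mulGen i s) ∈ Set.Icc (potential T s - 1) (potential T s + 1) := by
  rw [Set.mem_Icc]
  rcases exists_eq_ofFactors i s with ⟨k, js, rfl⟩ | ⟨e, rfl, k, j, js, rfl⟩
  · rw [mulGen_ofFactors_self]
    simp only [potential_ofFactors, List.map_cons, List.sum_cons, factorWeight, Fin.val_zero]
    omega
  cases j using Fin.lastCases with
  | last =>
    rw [mulGen_ofFactors_last]
    simp only [potential_ofFactors, List.map_cons, List.sum_cons, factorWeight, Fin.val_last,
      mul_add, mul_one]
    omega
  | cast j =>
    rw [mulGen_ofFactors_castSucc]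
    simp only [potential_ofFactors, List.map_cons, List.sum_cons, factorWeight, Fin.val_castSucc,
      Fin.val_succ]
    omega

lemma potential_action_le (hT : 0 < T) (hTn : T < n + 2) {g : DA (n + 2)}
    (hg : g ∈ genSet 2 (DMat (n + 2))) (s : NormalForm n) :
    potential T (action n g s) ≤ potential T s + 1 := by
  obtain ⟨i, rfl | rfl⟩ := hg
  · rw [action_gen]
    exact (potential_mulGen_mem_Icc hT hTn i s).2
  · rw [map_inv, action_gen]
    have hback := (potential_mulGen_mem_Icc hT hTn i (divGen i s)).1
    rw [mulGen_divGen] at hback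
    exact sub_le_iff_le_add.1 hback

lemma potential_action_prod_le_length (hT : 0 < T) (hTn : T < n + 2) {v : List (DA (n + 2))}
    (hv : ∀ g ∈ v, g ∈ genSet 2 (DMat (n + 2))) :
    potential T (action n v.prod (0, none)) ≤ v.length := by
  induction v with
  | nil => simp [potential]
  | cons g v ih =>
    rw [List.forall_mem_cons] at hv
    rw [List.prod_cons, map_mul, Equiv.Perm.mul_apply, List.length_cons, Nat.cast_add_one]
    exact (potential_action_le hT hTn hv.1 _).trans (by simpa using ih hv.2)

/-- The first factor of the normal form `s` records an initial alternating run of `w`: a positive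
run is the first factor itself, a negative run is the inverse of the part of `Δ` that the first
factor misses, so that a factor of length `j + 1` goes with a negative run of length
`j.rev + 1 = (n + 2) - (j + 1)`. -/
inductive Tracks : List L2 → NormalForm n → Prop
  | nil (k : ℤ) : Tracks [] (k, none)
  | pos (v : List L2) (k : ℤ) (i : Fin 2) (j : Fin (n + 1)) (js : List (Fin (n + 1))) :
      Tracks (alt (j + 1) (i, true) ++ v) (ofFactors k i (j :: js))
  | neg (v : List L2) (k : ℤ) (i : Fin 2) (j : Fin (n + 1)) (js : List (Fin (n + 1))) :
      Tracks (alt (j.rev + 1) (i, false) ++ v) (ofFactors k (i + 1) (j :: js))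

lemma potential_ofFactors_push_pos (hT : 0 < T) (k : ℤ) (e : Fin 2) (js : List (Fin (n + 1))) :
    potential T (ofFactors k e (0 :: js)) = potential T (ofFactors k e js) + 1 := by
  simp only [potential_ofFactors, List.map_cons, List.sum_cons, factorWeight, Fin.val_zero]
  omega

lemma potential_ofFactors_push_neg (hTn : T < n + 2) (k : ℤ) (e : Fin 2)
    (js : List (Fin (n + 1))) :
    potential T (ofFactors (k - 1) e (Fin.last n :: js)) = potential T (ofFactors k e js) + 1 := by
  simp only [potential_ofFactors, List.map_cons, List.sum_cons, factorWeight, Fin.val_last,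
    mul_sub, mul_one]
  omega

lemma potential_ofFactors_succ {j : Fin n} (hj : j + 2 ≤ T) (k : ℤ) (e e' : Fin 2)
    (js : List (Fin (n + 1))) :
    potential T (ofFactors k e' (j.succ :: js)) =
      potential T (ofFactors k e (j.castSucc :: js)) + 1 := by
  simp only [potential_ofFactors, List.map_cons, List.sum_cons, factorWeight, Fin.val_castSucc,
    Fin.val_succ]
  omega

lemma potential_ofFactors_castSucc {j : Fin n} (hj : T ≤ j + 1) (k : ℤ) (e e' : Fin 2)
    (js : List (Fin (n + 1))) :
    potential T (ofFactors k e' (j.castSucc :: js)) =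
      potential T (ofFactors k e (j.succ :: js)) + 1 := by
  simp only [potential_ofFactors, List.map_cons, List.sum_cons, factorWeight, Fin.val_castSucc,
    Fin.val_succ]
  omega

namespace Tracks

variable {b : Bool → ℕ} {i : Fin 2} {w : List L2} {s : NormalForm n}

lemma cons_pos (hs : Tracks w s) (hw : RunBounded b ((i, true) :: w)) (hT : 0 < T)
    (hTn : T < n + 2) (hb : b true ≤ T) :
    Tracks ((i, true) :: w) (mulGen i s) ∧ potential T (mulGen i s) = potential T s + 1 := by
  have hpush (k : ℤ) (js : List (Fin (n + 1))) :
      Tracks ((i, true) :: w) (mulGen i (ofFactors k i js)) ∧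
        potential T (mulGen i (ofFactors k i js)) = potential T (ofFactors k i js) + 1 := by
    rw [mulGen_ofFactors_self]
    exact ⟨.pos w k i 0 js, potential_ofFactors_push_pos hT k i js⟩
  cases hs with
  | nil k => exact hpush k []
  | neg v k e j js =>
    have hcancel : (e, false) ≠ linv (i, true) := (List.isChain_cons.1 hw.reduced).1 _ rfl
    obtain rfl : i = e + 1 := eq_add_one_of_ne fun h ↦ hcancel (by rw [h]; rfl)
    exact hpush k (j :: js)
  | pos v k e j js =>
    by_cases hi : i = e
    · exact hi ▸ hpush k (j :: js)
    obtain rfl := eq_add_one_of_ne hi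
    have hrun : alt (j + 1 + 1) (e + 1, true) ++ v =
        (e + 1, true) :: (alt (j + 1) (e, true) ++ v) := by
      rw [alt_succ, swapName, add_one_add_one, List.cons_append]
    have hlen : j + 1 + 1 ≤ b true := hw.le_of_infix (hrun ▸ (List.prefix_append _ v).isInfix)
    cases j using Fin.lastCases with
    | last => rw [Fin.val_last] at hlen; omega
    | cast j =>
      rw [Fin.val_castSucc] at hlen hrun
      rw [mulGen_ofFactors_castSucc, Fin.val_castSucc, ← hrun, ← Fin.val_succ]
      exact ⟨.pos v k (e + 1) j.succ js, potential_ofFactors_succ (by omega) k e (e + 1) js⟩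

lemma cons_neg (hs : Tracks w s) (hw : RunBounded b ((i, false) :: w)) (hT : 0 < T)
    (hTn : T < n + 2) (hb : T + b false ≤ n + 2) :
    Tracks ((i, false) :: w) (divGen i s) ∧ potential T (divGen i s) = potential T s + 1 := by
  obtain ⟨i, rfl⟩ : ∃ i', i = i' + 1 := ⟨i + 1, (add_one_add_one i).symm⟩
  have hpush (k : ℤ) (js : List (Fin (n + 1))) :
      Tracks ((i + 1, false) :: w) (divGen (i + 1) (ofFactors k i js)) ∧
        potential T (divGen (i + 1) (ofFactors k i js)) = potential T (ofFactors k i js) + 1 := by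
    have htracks := Tracks.neg w (k - 1) (i + 1) (Fin.last n) js
    rw [Fin.rev_last, add_one_add_one] at htracks
    rw [divGen_ofFactors_add_one]
    exact ⟨htracks, potential_ofFactors_push_neg hTn k i js⟩
  cases hs with
  | nil k => exact hpush k []
  | pos v k e j js =>
    have hcancel : (e, true) ≠ linv (i + 1, false) := (List.isChain_cons.1 hw.reduced).1 _ rfl
    obtain rfl : e = i := by
      rw [← add_one_add_one i]
      exact eq_add_one_of_ne fun h ↦ hcancel (by rw [h]; rfl)
    exact hpush k (j :: js)
  | neg v k e j js =>
    by_cases hi : i = e + 1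
    · exact hi ▸ hpush k (j :: js)
    obtain rfl : i = e := by rw [eq_add_one_of_ne hi, add_one_add_one]
    have hrun : alt (j.rev + 1 + 1) (i + 1, false) ++ v =
        (i + 1, false) :: (alt (j.rev + 1) (i, false) ++ v) := by
      rw [alt_succ, swapName, add_one_add_one, List.cons_append]
    have hlen : j.rev + 1 + 1 ≤ b false := hw.le_of_infix (hrun ▸ (List.prefix_append _ v).isInfix)
    rw [Fin.val_rev] at hlen
    cases j using Fin.cases with
    | zero => rw [Fin.val_zero] at hlen; omega
    | succ j =>
      rw [Fin.val_succ] at hlen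
      have htracks := Tracks.neg v k (i + 1) j.castSucc js
      rw [Fin.rev_castSucc, Fin.val_succ, ← Fin.val_castSucc, ← Fin.rev_succ, hrun, add_one_add_one]
        at htracks
      rw [divGen_ofFactors_succ]
      exact ⟨htracks, potential_ofFactors_castSucc (by omega) k (i + 1) i js⟩

end Tracks

lemma tracks_action_wElt {b : Bool → ℕ} {w : List L2} (hw : RunBounded b w) (hT : 0 < T)
    (hTn : T < n + 2) (hpos : b true ≤ T) (hneg : T + b false ≤ n + 2) :
    Tracks w (action n (wElt (n + 2) w) (0, none)) ∧
      potential T (action n (wElt (n + 2) w) (0, none)) = w.length := by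
  induction w with
  | nil => exact ⟨by simpa [wElt] using Tracks.nil 0, by simp [wElt, potential]⟩
  | cons l w ih =>
    obtain ⟨htracks, hlength⟩ := ih (hw.of_infix (List.suffix_cons l w).isInfix)
    rw [wElt_cons, map_mul, Equiv.Perm.mul_apply, List.length_cons, Nat.cast_add_one, ← hlength]
    obtain ⟨i, _ | _⟩ := l
    · rw [action_toGen2_neg]
      exact htracks.cons_neg hw hT hTn hneg
    · rw [action_toGen2_pos]
      exact htracks.cons_pos hw hT hTn hpos

end NormalForm

lemma toGen2_mem_genSet (m : ℕ) (l : L2) : toGen2 m l ∈ genSet 2 (DMat m) := by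
  obtain ⟨i, _ | _⟩ := l
  · exact ⟨i, .inr rfl⟩
  · exact ⟨i, .inl rfl⟩

open NormalForm in
lemma geo_of_runBounded {m T : ℕ} {b : Bool → ℕ} {w : List L2} (hw : RunBounded b w) (hT : 0 < T)
    (hTm : T < m) (hpos : b true ≤ T) (hneg : T + b false ≤ m) : Geo m w := by
  obtain ⟨n, rfl⟩ : ∃ n, m = n + 2 := ⟨m - 2, by omega⟩
  have hword : w.length ∈ {N | ∃ v : List (DA (n + 2)),
      (∀ g ∈ v, g ∈ genSet 2 (DMat (n + 2))) ∧ v.length = N ∧ v.prod = wElt (n + 2) w} :=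
    ⟨w.map (toGen2 (n + 2)), List.forall_mem_map.2 fun l _ ↦ toGen2_mem_genSet _ l,
      List.length_map _, rfl⟩
  refine le_antisymm (Nat.sInf_le hword) (le_csInf ⟨_, hword⟩ ?_)
  rintro N ⟨v, hv, rfl, hprod⟩
  have hbound := potential_action_prod_le_length (T := T) (by omega) (by omega) hv
  rw [hprod, (tracks_action_wElt hw (by omega) (by omega) (by omega) (by omega)).2] at hbound
  exact_mod_cast hbound

/-! ### The unsigned move -/

/-- `α ++ alt p x ++ ξ ++ alt q y ++ β` is a word in which `alt p x ++ ξ ++ alt q y` is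
over-critical and admits an unsigned move. Maximality of the two runs is encoded by separation from
the rest of the word, which for a freely reduced word is the same thing. -/
structure OverCritical (m : ℕ) (α : List L2) (p : ℕ) (x : L2) (ξ : List L2) (q : ℕ) (y : L2)
    (β : List L2) : Prop where
  left_lt : p < m
  right_lt : q < m
  lt_add : m < p + q
  sign_eq : y.2 = !x.2
  before_left : Separated α (alt p x)
  after_left : Separated (alt p x) (ξ ++ alt q y ++ β)
  before_right : Separated (α ++ alt p x ++ ξ) (alt q y)
  after_right : Separated (alt q y) β

/-- The result of the length reducing `τ`-move on the over-critical word
`α ++ alt p x ++ ξ ++ alt q y ++ β`. The new last run `δ(alt (m - q) (swapInv y))` is the paper's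
`(t, z)ₘ₋ₙ`, respectively `(t⁻¹, z⁻¹)ₘ₋ₚ`. -/
def tauMove (m : ℕ) (α : List L2) (p : ℕ) (x : L2) (ξ : List L2) (q : ℕ) (y : L2) (β : List L2) :
    List L2 :=
  α ++ alt (m - p) (swapInv x) ++ (ξ ++ alt (m - q) (swapInv y)).map (dmap m) ++ β

lemma alt_eq_altE (q : ℕ) (y : L2) :
    alt q y = altE q (swapName^[q + 1] y) (swapName (swapName^[q + 1] y)) := by
  rw [altE_swapName, ← Function.iterate_add_apply,
    swapName_involutive.iterate_even ⟨q + 1, rfl⟩, id]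

lemma map_dmap_alt_swapInv {m q : ℕ} (hq : q ≤ m) (y : L2) :
    (alt (m - q) (swapInv y)).map (dmap m) =
      altE (m - q) (swapInv (swapName^[q + 1] y)) (swapName (swapInv (swapName^[q + 1] y))) := by
  rw [altE_swapName, iterate_swapName_swapInv hq, ← Function.iterate_add_apply,
    swapName_involutive.iterate_even ⟨q + 1, rfl⟩, id, map_alt (dmap_commute_swapName m)]

namespace OverCritical

variable {m p q : ℕ} {α ξ β : List L2} {x y : L2}

lemma left_pos (h : OverCritical m α p x ξ q y β) : 0 < p := by
  linarith [h.right_lt, h.lt_add]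

lemma right_pos (h : OverCritical m α p x ξ q y β) : 0 < q := by
  linarith [h.left_lt, h.lt_add]

lemma uMove (h : OverCritical m α p x ξ q y β) :
    UMove m (α ++ alt p x ++ ξ ++ alt q y ++ β) (tauMove m α p x ξ q y β) := by
  have hbefore_left c (hc : α.getLast? = some c) : ¬(c.2 = x.2 ∧ c.1 ≠ x.1) :=
    h.before_left.not_alternate_alt_right c x hc (head?_alt h.left_pos x)
  have hafter_left := h.after_left.not_alternate_alt_left
  have hbefore_right := h.before_right.not_alternate_alt_right
  have hafter_right c (hc : β.head? = some c) : ¬(c.2 = y.2 ∧ c.1 ≠ (swapName^[q + 1] y).1) :=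
    h.after_right.not_alternate_alt_left c _ hc (getLast?_alt h.right_pos y)
  have hp := h.left_pos
  have hq := h.right_pos
  have ht : (swapName^[q + 1] y).2 = !x.2 := (iterate_swapName_snd _ y).trans h.sign_eq
  rw [h.sign_eq] at hbefore_right hafter_right
  rw [tauMove, List.map_append, map_dmap_alt_swapInv h.right_lt.le, ← List.append_assoc]
  rw [alt_eq_altE q y] at hafter_left hbefore_right ⊢
  generalize swapName^[q + 1] y = t at *
  obtain ⟨i, _ | _⟩ := x <;> obtain ⟨j, s⟩ := t <;> obtain rfl := ht
  · exact .inr ⟨α, β, ξ, q, p, (i, true), (i + 1, true), (j + 1, true), (j, true), rfl, rfl, rfl,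
      rfl, by simp, by simp, hq, h.right_lt, hp, h.left_lt, add_comm p q ▸ h.lt_add, rfl,
      by simp [alt, swapInv, swapName, linv, add_one_add_one],
      hbefore_left, hafter_left, hbefore_right, hafter_right⟩
  · exact .inl ⟨α, β, ξ, p, q, (i, true), (i + 1, true), (j + 1, true), (j, true), rfl, rfl, rfl,
      rfl, by simp, by simp, hp, h.left_lt, hq, h.right_lt, h.lt_add, rfl,
      by simp [alt, swapInv, swapName, linv, add_one_add_one],
      hbefore_left, hafter_left, hbefore_right, hafter_right⟩

lemma wElt_tauMove (h : OverCritical m α p x ξ q y β) :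
    wElt m (tauMove m α p x ξ q y β) = wElt m (α ++ alt p x ++ ξ ++ alt q y ++ β) := by
  have hp := Nat.add_sub_of_le h.left_lt.le
  have hq := Nat.add_sub_of_le h.right_lt.le
  simp only [tauMove, wElt_append, mul_assoc, mul_right_inj]
  simp only [← mul_assoc, mul_left_inj]
  cases hx : x.2 with
  | true =>
    have hnew : wElt m (alt (m - q) (swapInv y)) = wElt m (alt q y) * garside m :=
      (wElt_alt_eq_mul_garside (Nat.sub_add_cancel h.right_lt.le)
        (by simp [swapInv, h.sign_eq, hx])).trans (by rw [swapInv_involutive])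
    rw [← mul_left_inj (garside m), mul_assoc, wElt_map_dmap_mul_garside, wElt_append,
      wElt_alt_eq_mul_garside hp hx]
    simp only [mul_assoc, hnew]
  | false =>
    have hnew : wElt m (alt (m - p) (swapInv x)) = wElt m (alt p x) * garside m :=
      (wElt_alt_eq_mul_garside (Nat.sub_add_cancel h.left_lt.le) (by simp [swapInv, hx])).trans
        (by rw [swapInv_involutive])
    rw [hnew, mul_assoc _ (garside m), ← wElt_mul_garside, wElt_append,
      wElt_alt_eq_mul_garside hq (x := y) (by simp [h.sign_eq, hx])]
    simp only [mul_assoc]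

lemma separated_before_left (h : OverCritical m α p x ξ q y β) :
    Separated α (alt (m - p) (swapInv x)) :=
  (Separated.alt_swapInv_right_iff h.left_pos (Nat.sub_pos_of_lt h.left_lt)).2 h.before_left

lemma separated_after_left (h : OverCritical m α p x ξ q y β) :
    Separated (α ++ alt (m - p) (swapInv x)) ((ξ ++ alt (m - q) (swapInv y)).map (dmap m)) := by
  have hmq := Nat.sub_pos_of_lt h.right_lt
  rw [Separated.append_left_iff (alt_ne_nil (Nat.sub_pos_of_lt h.left_lt)),
    Separated.alt_swapInv_left_iff h.left_pos h.left_lt]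
  have hafter := h.after_left
  cases ξ with
  | nil =>
    rw [List.nil_append, Separated.append_right_iff (alt_ne_nil h.right_pos)] at hafter
    exact (Separated.alt_swapInv_right_iff h.right_pos hmq).2 hafter
  | cons l ξ => exact hafter

lemma separated_before_right (h : OverCritical m α p x ξ q y β) :
    Separated ξ (alt (m - q) (swapInv y)) := by
  rw [Separated.alt_swapInv_right_iff h.right_pos (Nat.sub_pos_of_lt h.right_lt)]
  rcases ξ.eq_nil_or_concat with rfl | ⟨ξ, l, rfl⟩
  · simp [Separated]
  · exact (Separated.append_left_iff (by simp)).1 h.before_right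

lemma separated_after_right (h : OverCritical m α p x ξ q y β) :
    Separated (α ++ alt (m - p) (swapInv x) ++ (ξ ++ alt (m - q) (swapInv y)).map (dmap m)) β := by
  have hne := alt_ne_nil (Nat.sub_pos_of_lt h.right_lt) (x := swapInv y)
  rw [Separated.append_left_iff (by simp [hne]), List.map_append,
    Separated.append_left_iff (by simpa using hne)]
  have hswapped := (Separated.alt_swapInv_left_iff h.right_pos h.right_lt).2 h.after_right
  have hmapped := hswapped.map_dmap m
  rwa [List.map_map, (dmap_involutive m).comp_self, List.map_id] at hmapped

lemma runBounded_tauMove {b : Bool → ℕ} (h : OverCritical m α p x ξ q y β)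
    (hw : RunBounded b (α ++ alt p x ++ ξ ++ alt q y ++ β)) :
    RunBounded b (tauMove m α p x ξ q y β) := by
  have hsum := h.lt_add
  have hmp : 0 < m - p := Nat.sub_pos_of_lt h.left_lt
  have hmq : 0 < m - q := Nat.sub_pos_of_lt h.right_lt
  have hp : p ≤ b x.2 := hw.le_of_infix ⟨α, ξ ++ alt q y ++ β, by simp⟩
  have hq : q ≤ b y.2 := hw.le_of_infix ⟨α ++ alt p x ++ ξ, β, by simp⟩
  have hxsign : (swapInv x).2 = y.2 := h.sign_eq.symm
  have hysign : (swapInv y).2 = x.2 := by rw [swapInv, h.sign_eq, Bool.not_not]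
  have hα : RunBounded b α := hw.of_infix ⟨[], alt p x ++ ξ ++ alt q y ++ β, by simp⟩
  have hξ : RunBounded b ξ := hw.of_infix ⟨α ++ alt p x, alt q y ++ β, by simp⟩
  have hβ : RunBounded b β := hw.of_infix ⟨α ++ alt p x ++ ξ ++ alt q y, [], by simp⟩
  have hleft : RunBounded b (alt (m - p) (swapInv x)) := runBounded_alt (by rw [hxsign]; omega)
  have hright : RunBounded b (alt (m - q) (swapInv y)) := runBounded_alt (by rw [hysign]; omega)
  exact ((hα.append hleft h.separated_before_left).append
    ((hξ.append hright h.separated_before_right).map_dmap m) h.separated_after_left).append hβ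
      h.separated_after_right

lemma length_tauMove_lt (h : OverCritical m α p x ξ q y β) :
    (tauMove m α p x ξ q y β).length < (α ++ alt p x ++ ξ ++ alt q y ++ β).length := by
  have := h.lt_add
  simp only [tauMove, List.length_append, List.length_map, length_alt]
  omega

end OverCritical

lemma RunBounded.exists_eq_append_alt {b : Bool → ℕ} {w : List L2} (hw : RunBounded b w)
    {p q : ℕ} {x y : L2} (hp : 0 < p) (hq : 0 < q) (hx : alt p x <:+: w) (hy : alt q y <:+: w)
    (hbp : b x.2 ≤ p) (hsign : y.2 = !x.2) :
    ∃ α ξ β, w = α ++ alt p x ++ ξ ++ alt q y ++ β ∨ w = α ++ alt q y ++ ξ ++ alt p x ++ β := by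
  obtain ⟨α, β, rfl⟩ := hx
  have hsepα : Separated α (alt p x) :=
    (hw.of_infix ⟨[], β, by simp⟩).separated_alt_right hbp
  have hsepβ : Separated (alt p x) β :=
    (hw.of_infix ⟨α, [], by simp⟩).separated_alt_left hbp
  rcases alt_infix_append ((Separated.append_left_iff (alt_ne_nil hp)).2 hsepβ) hy with
    hleft | ⟨γ, δ, rfl⟩
  · rcases alt_infix_append hsepα hleft with ⟨γ, δ, rfl⟩ | hinside
    · exact ⟨γ, δ, β, .inr rfl⟩
    · have hmem := hinside.subset (List.mem_of_mem_head? (head?_alt hq y))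
      simp [sign_of_mem_alt hmem] at hsign
  · exact ⟨α, γ, δ, .inl (by simp)⟩

lemma RunBounded.overCritical {b : Bool → ℕ} {m p q : ℕ} {α ξ β : List L2} {x y : L2}
    (hw : RunBounded b (α ++ alt p x ++ ξ ++ alt q y ++ β)) (hp : b x.2 ≤ p) (hq : b y.2 ≤ q)
    (hpm : p < m) (hqm : q < m) (hpq : m < p + q) (hsign : y.2 = !x.2) :
    OverCritical m α p x ξ q y β where
  left_lt := hpm
  right_lt := hqm
  lt_add := hpq
  sign_eq := hsign
  before_left := (hw.of_infix ⟨[], ξ ++ alt q y ++ β, by simp⟩).separated_alt_right hp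
  after_left := (hw.of_infix (B := α ++ alt p x ++ ξ ++ alt q y ++ β)
    ⟨α, [], by simp⟩).separated_alt_left hp
  before_right := (hw.of_infix ⟨[], β, by simp⟩).separated_alt_right hq
  after_right := (hw.of_infix ⟨α ++ alt p x ++ ξ, [], by simp⟩).separated_alt_left hq

lemma RunBounded.exists_uMove {b : Bool → ℕ} {m : ℕ} {w : List L2} (hw : RunBounded b w) {x y : L2}
    (hx : alt (b x.2) x <:+: w) (hy : alt (b y.2) y <:+: w) (hsign : y.2 = !x.2)
    (hb : ∀ s, b s < m) (hsum : m < b x.2 + b y.2) :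
    ∃ w', UMove m w w' ∧ RunBounded b w' ∧ wElt m w' = wElt m w ∧ w'.length < w.length := by
  have hxm := hb x.2
  have hym := hb y.2
  obtain ⟨α, ξ, β, rfl | rfl⟩ :=
    hw.exists_eq_append_alt (by omega) (by omega) hx hy le_rfl hsign
  · have h := hw.overCritical le_rfl le_rfl (hb _) (hb _) hsum hsign
    exact ⟨_, h.uMove, h.runBounded_tauMove hw, h.wElt_tauMove, h.length_tauMove_lt⟩
  · have h := hw.overCritical le_rfl le_rfl (hb _) (hb _) (by omega)
      (by rw [hsign, Bool.not_not])
    exact ⟨_, h.uMove, h.runBounded_tauMove hw, h.wElt_tauMove, h.length_tauMove_lt⟩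

lemma geo_or_exists_uMove {m : ℕ} (hm : 2 ≤ m) {w : List L2} (hw : Reduced w)
    (hrun : ∀ s, maxRun s w < m) :
    Geo m w ∨ ∃ w', UMove m w w' ∧ RunBounded (maxRun · w) w' ∧ wElt m w' = wElt m w ∧
      w'.length < w.length := by
  have hbounded := runBounded_maxRun hw
  have hpos := hrun true
  have hneg := hrun false
  by_cases hsum : max 1 (maxRun true w) + maxRun false w ≤ m
  · exact .inl (geo_of_runBounded hbounded (lt_max_of_lt_left one_pos) (max_lt hm hpos)
      (le_max_right _ _) hsum)
  · obtain ⟨i, hi⟩ := exists_alt_maxRun_infix true w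
    obtain ⟨j, hj⟩ := exists_alt_maxRun_infix false w
    exact .inr (hbounded.exists_uMove (x := (i, true)) (y := (j, false)) hi hj rfl hrun
      (by dsimp only; omega))

lemma exists_chain_of_descent {α : Type*} (f : α → ℕ) {P Q : α → Prop} {R : α → α → Prop}
    (hstep : ∀ a, P a → Q a ∨ ∃ a', R a a' ∧ P a' ∧ f a' < f a) {a : α} (ha : P a) :
    ∃ (t : ℕ) (u : ℕ → α), u 0 = a ∧ (∀ i < t, R (u i) (u (i + 1))) ∧ (∀ i ≤ t, P (u i)) ∧
      Q (u t) := by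
  induction hn : f a using Nat.strong_induction_on generalizing a with
  | _ n ih =>
    rcases hstep a ha with hQ | ⟨a', hR, ha', hlt⟩
    · exact ⟨0, fun _ ↦ a, rfl, by simp, fun _ _ ↦ ha, hQ⟩
    · obtain ⟨t, u, h0, hRu, hPu, hQu⟩ := ih (f a') (hn ▸ hlt) ha' rfl
      refine ⟨t + 1, fun i ↦ i.casesOn a u, rfl, ?_, ?_, hQu⟩
      · rintro (_ | i) hi
        · exact (congrArg (R a) h0).mpr hR
        · exact hRu i (by omega)
      · rintro (_ | i) hi
        · exact ha
        · exact hPu i (by omega)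

/-- **Lemma.** A freely reduced word `w` with `0 < p(w) < m` and `0 < n(w) < m` can be
reduced to a geodesic word by a sequence of unsigned length-reducing `τ`-moves alone;
in particular all intermediate words are freely reduced and represent the same
element of `DA(m)` as `w`. -/
theorem reduce_by_unsigned_moves
    (m : ℕ) (hm : 2 ≤ m) (w : List L2)
    (hred : Reduced w)
    (hp0 : ∃ l ∈ w, l.2 = true)
    (hpm : ∀ u : List L2, u <:+: w → PosAlt u → u.length < m)
    (hn0 : ∃ l ∈ w, l.2 = false)
    (hnm : ∀ u : List L2, u <:+: w → NegAlt u → u.length < m) :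
    ∃ (t : ℕ) (f : ℕ → List L2), f 0 = w ∧
      (∀ i < t, UMove m (f i) (f (i + 1))) ∧
      (∀ i ≤ t, Reduced (f i) ∧ wElt m (f i) = wElt m w) ∧
      Geo m (f t) := by
  have hrun : ∀ s, maxRun s w < m
    | true => by
      obtain ⟨i, hi⟩ := exists_alt_maxRun_infix true w
      simpa only [length_alt] using hpm _ hi (posAlt_alt _ i)
    | false => by
      obtain ⟨i, hi⟩ := exists_alt_maxRun_infix false w
      simpa only [length_alt] using hnm _ hi (negAlt_alt _ i)
  have hdescent : ∀ u, (Reduced u ∧ wElt m u = wElt m w) ∧ (∀ s, maxRun s u < m) →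
      Geo m u ∨ ∃ u', UMove m u u' ∧
        ((Reduced u' ∧ wElt m u' = wElt m w) ∧ ∀ s, maxRun s u' < m) ∧ u'.length < u.length := by
    rintro u ⟨⟨hu, helt⟩, hrunu⟩
    refine (geo_or_exists_uMove hm hu hrunu).imp_right ?_
    rintro ⟨u', hmove, hbounded, helt', hlength⟩
    exact ⟨u', hmove, ⟨⟨hbounded.reduced, helt'.trans helt⟩,
      fun s ↦ (hbounded.maxRun_le s).trans_lt (hrunu s)⟩, hlength⟩
  obtain ⟨t, f, h0, hmoves, hinv, hgeo⟩ :=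
    exists_chain_of_descent List.length hdescent ⟨⟨hred, rfl⟩, hrun⟩
  exact ⟨t, f, h0, hmoves, fun i hi ↦ (hinv i hi).1, hgeo⟩

end ArtinRD
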